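/- arXiv:2604.00914 — 2 statements merged into one kernel-verified Lean document; each statement's English description precedes it below -/
import Mathlib

section
/- Let S_k(x) = Σ_{j=1}^{k} sin(j x)/j denote the k-th partial sum of the Fourier series of f(x) = (π − x)/2, and set R_k(x) = (π − x)/2 − S_k(x). Then for every integer k ≥ 1 and every real x ∈ (0, π], one has |R_k(x)| ≤ 1/((k+1)·sin(x/2)). -/
open Real

/-!
`R_k(x)` is the imaginary part at `z = exp (ix)` of the Taylor remainder `∑_{j > k} z ^ j / j` of
`-log (1 - z)`. For `|z| < 1`, the geometric sums `∑_{k < j ≤ n} z ^ j` are bounded by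
`2 / |1 - z|`, so Abel's inequality with the decreasing weights `1 / j` bounds the remainder by
`2 / ((k + 1) |1 - z|)`. This bound extends by continuity to every `z ≠ 1` on the unit circle, where
`|1 - exp (ix)| = 2 sin (x / 2)`.
-/

theorem norm_sum_range_smul_le_of_antitone {E : Type*} [SeminormedAddCommGroup E]
    [NormedSpace ℝ E] {f : ℕ → ℝ} {g : ℕ → E} {b : ℝ} (hf : Antitone f) (hf₀ : ∀ i, 0 ≤ f i)
    (hg : ∀ n, ‖∑ i ∈ Finset.range n, g i‖ ≤ b) (n : ℕ) :
    ‖∑ i ∈ Finset.range n, f i • g i‖ ≤ f 0 * b := by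
  have head : ‖f (n - 1) • ∑ i ∈ Finset.range n, g i‖ ≤ f (n - 1) * b := by
    rw [norm_smul, Real.norm_of_nonneg (hf₀ _)]
    exact mul_le_mul_of_nonneg_left (hg n) (hf₀ _)
  have increment (i : ℕ) :
      ‖(f (i + 1) - f i) • ∑ j ∈ Finset.range (i + 1), g j‖ ≤ (f i - f (i + 1)) * b := by
    have hle : f (i + 1) ≤ f i := hf i.le_succ
    rw [norm_smul, norm_sub_rev, Real.norm_of_nonneg (sub_nonneg.2 hle)]
    exact mul_le_mul_of_nonneg_left (hg _) (sub_nonneg.2 hle)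
  calc ‖∑ i ∈ Finset.range n, f i • g i‖
      ≤ f (n - 1) * b + ∑ i ∈ Finset.range (n - 1), (f i - f (i + 1)) * b := by
        rw [Finset.sum_range_by_parts]
        exact norm_sub_le_of_le head (norm_sum_le_of_le _ fun i _ => increment i)
    _ = f 0 * b := by rw [← Finset.sum_mul, Finset.sum_range_sub']; ring

theorem norm_le_of_hasSum_antitone_smul {E : Type*} [SeminormedAddCommGroup E]
    [NormedSpace ℝ E] {f : ℕ → ℝ} {g : ℕ → E} {a : E} {b : ℝ}
    (ha : HasSum (fun i => f i • g i) a) (hf : Antitone f) (hf₀ : ∀ i, 0 ≤ f i)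
    (hg : ∀ n, ‖∑ i ∈ Finset.range n, g i‖ ≤ b) : ‖a‖ ≤ f 0 * b :=
  le_of_tendsto' ha.tendsto_sum_nat.norm (norm_sum_range_smul_le_of_antitone hf hf₀ hg)

theorem norm_sum_range_pow_add_le {K : Type*} [NormedDivisionRing K] {z : K} (hz : ‖z‖ ≤ 1)
    (hz₁ : z ≠ 1) (m n : ℕ) : ‖∑ i ∈ Finset.range n, z ^ (i + m)‖ ≤ 2 / ‖1 - z‖ := by
  have norm_pow_le (l : ℕ) : ‖z ^ l‖ ≤ 1 := by
    rw [norm_pow]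
    exact pow_le_one₀ (norm_nonneg z) hz
  simp only [pow_add]
  rw [← Finset.sum_mul, geom_sum_eq hz₁, norm_mul, norm_div, norm_sub_rev z 1]
  calc ‖z ^ n - 1‖ / ‖1 - z‖ * ‖z ^ m‖
      ≤ (1 + 1) / ‖1 - z‖ * 1 := by
        gcongr
        · exact norm_sub_le_of_le (norm_pow_le n) norm_one.le
        · exact norm_pow_le m
    _ = 2 / ‖1 - z‖ := by ring

theorem hasSum_taylorSeries_neg_log_tail {z : ℂ} (hz : ‖z‖ < 1) (k : ℕ) :
    HasSum (fun i : ℕ => z ^ (i + (k + 1)) / (i + (k + 1) : ℕ))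
      (-Complex.log (1 - z) - ∑ j ∈ Finset.Icc 1 k, z ^ j / j) := by
  have drop_zero : ∑ j ∈ Finset.range (k + 1), z ^ j / (j : ℂ) =
      ∑ j ∈ Finset.Icc 1 k, z ^ j / j := by
    rw [Finset.sum_range_eq_add_Ico _ k.succ_pos, Nat.cast_zero, div_zero, zero_add]
    rfl
  rw [← drop_zero]
  exact (hasSum_nat_add_iff' (k + 1)).2 (Complex.hasSum_taylorSeries_neg_log hz)

theorem norm_neg_log_one_sub_sub_sum_le_of_norm_lt_one {z : ℂ} (hz : ‖z‖ < 1) (k : ℕ) :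
    ‖-Complex.log (1 - z) - ∑ j ∈ Finset.Icc 1 k, z ^ j / j‖ ≤ 2 / ((k + 1) * ‖1 - z‖) := by
  have hz₁ : z ≠ 1 := by
    rintro rfl
    simp at hz
  set weight : ℕ → ℝ := fun i => 1 / ((i + k : ℕ) + 1) with weight_def
  have weight_antitone : Antitone weight := fun i j hij => Nat.one_div_le_one_div (by lia)
  have tail : HasSum (fun i => weight i • z ^ (i + (k + 1)))
      (-Complex.log (1 - z) - ∑ j ∈ Finset.Icc 1 k, z ^ j / j) :=
    (hasSum_taylorSeries_neg_log_tail hz k).congr_fun fun i => by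
      rw [Complex.real_smul, weight_def]
      push_cast
      ring
  calc ‖-Complex.log (1 - z) - ∑ j ∈ Finset.Icc 1 k, z ^ j / j‖
      ≤ weight 0 * (2 / ‖1 - z‖) :=
        norm_le_of_hasSum_antitone_smul tail weight_antitone
          (fun i => Nat.one_div_pos_of_nat.le) (norm_sum_range_pow_add_le hz.le hz₁ (k + 1))
    _ = 2 / ((k + 1) * ‖1 - z‖) := by
        rw [weight_def, div_mul_div_comm, one_mul, zero_add]

theorem one_sub_mem_slitPlane_of_norm_le_one {z : ℂ} (hz : ‖z‖ ≤ 1) (hz₁ : z ≠ 1) :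
    1 - z ∈ Complex.slitPlane := by
  rw [Complex.mem_slitPlane_iff]
  by_contra! h
  simp only [Complex.sub_re, Complex.one_re, Complex.sub_im, Complex.one_im] at h
  have hre : z.re ≤ 1 := (Complex.re_le_norm z).trans hz
  exact hz₁ (Complex.ext (by simpa using (by linarith : z.re = 1)) (by simpa using h.2))

theorem norm_neg_log_one_sub_sub_sum_le {z : ℂ} (hz : ‖z‖ ≤ 1) (hz₁ : z ≠ 1) (k : ℕ) :
    ‖-Complex.log (1 - z) - ∑ j ∈ Finset.Icc 1 k, z ^ j / j‖ ≤ 2 / ((k + 1) * ‖1 - z‖) := by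
  have hz_closure : z ∈ closure (Metric.ball (0 : ℂ) 1) := by
    simpa [closure_ball] using hz
  have hlog : 1 - z ∈ Complex.slitPlane := one_sub_mem_slitPlane_of_norm_le_one hz hz₁
  have hdenom : (k + 1) * ‖1 - z‖ ≠ 0 :=
    mul_ne_zero k.cast_add_one_ne_zero (norm_ne_zero_iff.2 (sub_ne_zero.2 hz₁.symm))
  refine ContinuousWithinAt.closure_le hz_closure ?_ ?_ fun w hw =>
    norm_neg_log_one_sub_sub_sum_le_of_norm_lt_one (mem_ball_zero_iff.1 hw) k
  · exact ContinuousAt.continuousWithinAt (by fun_prop (disch := assumption))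
  · exact ContinuousAt.continuousWithinAt (by fun_prop (disch := assumption))

theorem one_sub_exp_mul_I (z : ℂ) :
    1 - Complex.exp (z * Complex.I) = 2 * Complex.sin (z / 2) *
      (Complex.cos ((z - π) / 2) + Complex.sin ((z - π) / 2) * Complex.I) := by
  have exp_double : Complex.exp (z * Complex.I) =
      1 - 2 * Complex.sin (z / 2) ^ 2 +
        2 * Complex.sin (z / 2) * Complex.cos (z / 2) * Complex.I := by
    rw [← Complex.cos_two_mul_eq_one_sub, ← Complex.sin_two_mul, mul_div_cancel₀ z two_ne_zero,
      Complex.exp_mul_I]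
  rw [exp_double, sub_div, Complex.cos_sub_pi_div_two, Complex.sin_sub_pi_div_two]
  ring

theorem sin_half_pos_of_mem_Ioo {x : ℝ} (hx : x ∈ Set.Ioo 0 (2 * π)) : 0 < sin (x / 2) :=
  sin_pos_of_pos_of_lt_pi (by linarith [hx.1]) (by linarith [hx.2])

theorem arg_one_sub_exp_ofReal_mul_I {x : ℝ} (hx : x ∈ Set.Ioo 0 (2 * π)) :
    (1 - Complex.exp (x * Complex.I)).arg = (x - π) / 2 := by
  have := sin_half_pos_of_mem_Ioo hx
  rw [one_sub_exp_mul_I]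
  exact_mod_cast Complex.arg_mul_cos_add_sin_mul_I (by positivity)
    ⟨by linarith [hx.1, pi_pos], by linarith [hx.2, pi_pos]⟩

theorem im_exp_ofReal_mul_I_pow_div (x : ℝ) (j : ℕ) :
    (Complex.exp (x * Complex.I) ^ j / j).im = sin (j * x) / j := by
  rw [← Complex.exp_nat_mul, ← mul_assoc, Complex.div_natCast_im]
  exact_mod_cast congrArg (· / (j : ℝ)) (Complex.exp_ofReal_mul_I_im (j * x))

theorem lanczos_remainder_bound_general (k : ℕ) {x : ℝ} (hx : x ∈ Set.Ioo 0 (2 * π)) :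
    |(π - x) / 2 - ∑ j ∈ Finset.Icc 1 k, sin (j * x) / j| ≤ 1 / ((k + 1) * sin (x / 2)) := by
  have hsin : 0 < sin (x / 2) := sin_half_pos_of_mem_Ioo hx
  set z : ℂ := Complex.exp (x * Complex.I) with hz_def
  have hz : ‖z‖ = 1 := Complex.norm_exp_ofReal_mul_I x
  have hnorm : ‖1 - z‖ = 2 * sin (x / 2) := by
    rw [hz_def, norm_sub_rev, mul_comm, Complex.norm_exp_I_mul_ofReal_sub_one,
      norm_of_nonneg (by positivity)]
  have hz₁ : z ≠ 1 := by
    intro h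
    rw [h, sub_self, norm_zero] at hnorm
    linarith
  have him : (-Complex.log (1 - z) - ∑ j ∈ Finset.Icc 1 k, z ^ j / j).im =
      (π - x) / 2 - ∑ j ∈ Finset.Icc 1 k, sin (j * x) / j := by
    simp only [Complex.sub_im, Complex.neg_im, Complex.log_im, Complex.im_sum, hz_def,
      arg_one_sub_exp_ofReal_mul_I hx, im_exp_ofReal_mul_I_pow_div]
    ring
  calc |(π - x) / 2 - ∑ j ∈ Finset.Icc 1 k, sin (j * x) / j|
      ≤ ‖-Complex.log (1 - z) - ∑ j ∈ Finset.Icc 1 k, z ^ j / j‖ := him ▸ Complex.abs_im_le_norm _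
    _ ≤ 2 / ((k + 1) * ‖1 - z‖) := norm_neg_log_one_sub_sub_sum_le hz.le hz₁ k
    _ = 1 / ((k + 1) * sin (x / 2)) := by rw [hnorm]; field_simp

/-- For `S_k(x) = ∑_{j=1}^k sin(jx)/j`, the partial sum of the Fourier series of
`f(x) = (π - x)/2`, setting `R_k(x) = (π - x)/2 - S_k(x)`, one has
`|R_k(x)| ≤ 1/((k+1) sin(x/2))` for all integers `k ≥ 1` and `x ∈ (0, π]`. -/
theorem lanczos_remainder_bound (k : ℕ) (hk : 1 ≤ k) (x : ℝ)
    (hx : x ∈ Set.Ioc (0 : ℝ) Real.pi) :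
    |(Real.pi - x) / 2 - ∑ j ∈ Finset.Icc 1 k, Real.sin (j * x) / j|
      ≤ 1 / ((k + 1) * Real.sin (x / 2)) :=
  lanczos_remainder_bound_general k ⟨hx.1, by linarith [hx.2, pi_pos]⟩
end

section
/- For every real m > 0 and all integers k ≥ 1 and 1 ≤ k' ≤ k, one has Σ_{j=1}^{k'−1} (d^m_{j,k} − d^m_{j+1,k})/(j+1) ≤ m·C_m (the sum being empty when k' = 1). -/
open Real MeasureTheory

/-- Exponent-`m` Lanczos damping factors `d^m_{j,k}`, with `d^m_{0,k} = 1`. -/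
noncomputable def dampL (m : ℝ) (k j : ℕ) : ℝ :=
  if j = 0 then 1
  else (Real.sin (j * Real.pi / (k + 1)) / (j * Real.pi / (k + 1))) ^ m

/-- The constant `C_m = ∫_0^π (sin u)^{m-1}(sin u - u cos u)/u^{m+2} du`. -/
noncomputable def lanczosCm (m : ℝ) : ℝ :=
  ∫ u in Set.Ioo (0 : ℝ) Real.pi,
    Real.sin u ^ (m - 1) * (Real.sin u - u * Real.cos u) / u ^ (m + 2)

/-!
Put `h = π / (k + 1)`, so that `d^m_{j,k} = sinc (j h) ^ m` for every `j`, including `j = 0`.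
Define `g ≥ 0` by `-(sinc ^ m)' u = u * g u`; then `∫_0^π g = m * C_m`. On `[j h, (j + 1) h]` the
factor `u` is at most `(j + 1) h`, so the `j`-th summand is at most `h ∫ g` over that interval.
Adding these bounds over `0 ≤ j < k'` gives `(1 - d_1) + S ≤ h * (m * C_m)`, where `S` is the sum
to be bounded. This suffices if `h ≤ 1`, in particular if `k ≥ 3`. The only other nonempty sum has
`k = k' = 2`, where `h = π / 3` slightly exceeds `1` and the term `1 - d_1` compensates: since
`sinc (π / 3) ^ 7 ≤ sinc (2 * π / 3)`, Bernoulli's inequality gives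
`S = (d_1 - d_2) / 2 ≤ 3 * (1 - d_1)`, hence `4 / 3 * S ≤ π / 3 * (m * C_m)`.
-/

section WeightedDerivative

variable {f g : ℝ → ℝ}

lemma sub_le_mul_integral_of_hasDerivAt_neg_mul {x y : ℝ} (hxy : x ≤ y)
    (hf : ContinuousOn f (Set.Icc x y))
    (hf' : ∀ u ∈ Set.Ioo x y, HasDerivAt f (-(u * g u)) u)
    (hg : ∀ u ∈ Set.Ioo x y, 0 ≤ g u) (hgi : IntervalIntegrable g volume x y) :
    f x - f y ≤ y * ∫ u in x..y, g u := by
  have hint : IntegrableOn (fun u ↦ y * g u) (Set.Icc x y) :=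
    (intervalIntegrable_iff_integrableOn_Icc_of_le hxy).1 (hgi.const_mul y)
  have h := intervalIntegral.sub_le_integral_of_hasDeriv_right_of_le hxy hf.neg
    (fun u hu ↦ (hf' u hu).neg.hasDerivWithinAt) hint fun u hu ↦ by
      simpa using mul_le_mul_of_nonneg_right hu.2.le (hg u hu)
  rw [intervalIntegral.integral_const_mul, Pi.neg_apply, Pi.neg_apply] at h
  linarith

lemma sum_sub_div_succ_le_mul_integral {h : ℝ} (hh : 0 ≤ h) (n : ℕ)
    (hf : ContinuousOn f (Set.Icc 0 (n * h)))
    (hf' : ∀ u ∈ Set.Ioo 0 (n * h), HasDerivAt f (-(u * g u)) u)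
    (hg : ∀ u ∈ Set.Ioo 0 (n * h), 0 ≤ g u) (hgi : IntervalIntegrable g volume 0 (n * h)) :
    ∑ j ∈ Finset.range n, (f (j * h) - f ((j + 1 : ℕ) * h)) / (j + 1)
      ≤ h * ∫ u in 0..n * h, g u := by
  have hmono : Monotone fun j : ℕ ↦ (j : ℝ) * h := fun i j hij ↦ by dsimp only; gcongr
  have hpos (j : ℕ) : 0 ≤ (j : ℝ) * h := by positivity
  have hgi' {j : ℕ} (hj : j < n) :
      IntervalIntegrable g volume (j * h) ((j + 1 : ℕ) * h) := by
    refine hgi.mono_set ?_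
    rw [Set.uIcc_of_le (hmono j.le_succ), Set.uIcc_of_le (hpos n)]
    exact Set.Icc_subset_Icc (hpos j) (hmono hj)
  have hterm : ∀ j ∈ Finset.range n, (f (j * h) - f ((j + 1 : ℕ) * h)) / (j + 1)
      ≤ h * ∫ u in j * h..(j + 1 : ℕ) * h, g u := fun j hj ↦ by
    have hj := Finset.mem_range.1 hj
    have hsub := Set.Ioo_subset_Ioo (hpos j) (hmono hj)
    have hle := sub_le_mul_integral_of_hasDerivAt_neg_mul (hmono j.le_succ)
      (hf.mono (Set.Icc_subset_Icc (hpos j) (hmono hj))) (fun u hu ↦ hf' u (hsub hu))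
      (fun u hu ↦ hg u (hsub hu)) (hgi' hj)
    rw [div_le_iff₀ (by positivity)]
    refine hle.trans_eq ?_
    push_cast
    ring
  refine (Finset.sum_le_sum hterm).trans_eq ?_
  rw [← Finset.mul_sum, intervalIntegral.sum_integral_adjacent_intervals
    (a := fun j : ℕ ↦ (j : ℝ) * h) fun j hj ↦ hgi' hj, Nat.cast_zero, zero_mul]

lemma intervalIntegrable_of_hasDerivAt_neg_mul {b C : ℝ} (hb : 0 ≤ b)
    (hf : ContinuousOn f (Set.Icc 0 b))
    (hf' : ∀ u ∈ Set.Ioo 0 b, HasDerivAt f (-(u * g u)) u)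
    (hg : ∀ u ∈ Set.Ioo 0 b, 0 ≤ g u)
    (hgm : AEStronglyMeasurable g (volume.restrict (Set.Ioo 0 b)))
    (hgC : ∀ u ∈ Set.Ioo 0 b, u ≤ 1 → g u ≤ C) :
    IntervalIntegrable g volume 0 b := by
  have hint : IntegrableOn (fun u ↦ u * g u) (Set.Ioc 0 b) :=
    intervalIntegral.integrableOn_deriv_of_nonneg hf.neg
      (fun u hu ↦ by simpa using (hf' u hu).neg) fun u hu ↦ mul_nonneg hu.1.le (hg u hu)
  rw [intervalIntegrable_iff_integrableOn_Ioo_of_le hb]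
  refine ((hint.mono_set Set.Ioo_subset_Ioc_self).add
    (integrableOn_const (C := |C|) (by simp))).mono' hgm ?_
  refine (ae_restrict_iff' measurableSet_Ioo).2 (.of_forall fun u hu ↦ ?_)
  have hgu := hg u hu
  simp only [Real.norm_of_nonneg hgu, Pi.add_apply]
  rcases le_total u 1 with hu1 | hu1
  · have : 0 ≤ u * g u := mul_nonneg hu.1.le hgu
    linarith [hgC u hu hu1, le_abs_self C]
  · linarith [le_mul_of_one_le_left hgu hu1, abs_nonneg C]

end WeightedDerivative

lemma mul_cos_le_sin {u : ℝ} (h0 : 0 ≤ u) (hπ : u ≤ π) : u * cos u ≤ sin u := by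
  rcases lt_or_ge u (π / 2) with h | h
  · have hcos : 0 < cos u := cos_pos_of_mem_Ioo ⟨by linarith [pi_pos], h⟩
    rw [← le_div_iff₀ hcos, ← tan_eq_sin_div_cos]
    exact le_tan h0 h
  · have hcos : cos u ≤ 0 := cos_nonpos_of_pi_div_two_le_of_le h (by linarith)
    exact (mul_nonpos_of_nonneg_of_nonpos h0 hcos).trans (sin_nonneg_of_nonneg_of_le_pi h0 hπ)

lemma sinc_pos_of_mem_Ioo {u : ℝ} (hu : u ∈ Set.Ioo 0 π) : 0 < sinc u := by
  rw [sinc_of_ne_zero hu.1.ne']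
  exact div_pos (sin_pos_of_mem_Ioo hu) hu.1

lemma sinc_two_mul (x : ℝ) : sinc (2 * x) = sinc x * cos x := by
  rcases eq_or_ne x 0 with rfl | hx
  · simp
  · rw [sinc_of_ne_zero (by positivity), sinc_of_ne_zero hx, sin_two_mul]
    field_simp

lemma hasDerivAt_sinc {u : ℝ} (hu : u ≠ 0) :
    HasDerivAt sinc (-(u * ((sin u - u * cos u) / u ^ 3))) u := by
  have hquot : HasDerivAt (fun v ↦ sin v / v) ((cos u * u - sin u * 1) / u ^ 2) u :=
    (hasDerivAt_sin u).div (hasDerivAt_id u) hu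
  refine (hquot.congr_of_eventuallyEq ?_).congr_deriv (by field_simp; ring)
  filter_upwards [eventually_ne_nhds hu] with v hv using sinc_of_ne_zero hv

lemma rpow_sub_rpow_le_mul_one_sub {a b m : ℝ} (ha : 0 ≤ a) (hm : 0 ≤ m) {n : ℕ}
    (hab : a ^ (n + 1) ≤ b) : a ^ m - b ^ m ≤ n * (1 - a ^ m) := by
  have hpow : (a ^ m) ^ (n + 1) ≤ b ^ m := by
    rw [← rpow_natCast, ← rpow_mul ha, mul_comm, rpow_mul ha, rpow_natCast]
    exact rpow_le_rpow (by positivity) hab hm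
  have hbernoulli := one_add_mul_sub_le_pow (a := a ^ m) (by linarith [rpow_nonneg ha m]) (n + 1)
  push_cast at hbernoulli
  linarith

lemma sinc_pi_div_three_pow_le : sinc (π / 3) ^ 7 ≤ sinc (2 * (π / 3)) := by
  have hpos : 0 < sinc (π / 3) := sinc_pos_of_mem_Ioo ⟨by positivity, by linarith [pi_pos]⟩
  have hle : sinc (π / 3) ≤ √3 / 2 := by
    rw [sinc_of_ne_zero (by positivity), sin_pi_div_three]
    exact div_le_self (by positivity) (by linarith [pi_gt_three])
  have hpow : sinc (π / 3) ^ 6 ≤ 1 / 2 := by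
    calc sinc (π / 3) ^ 6 ≤ (√3 / 2) ^ 6 := by gcongr
      _ = (√3 ^ 2) ^ 3 / 64 := by ring
      _ ≤ 1 / 2 := by norm_num
  rw [sinc_two_mul, cos_pi_div_three, pow_succ']
  gcongr

section Lanczos

variable {m : ℝ}

/-- The density `-(sinc ^ m)' u / u` on `(0, π)`, which is `m` times the integrand of `C_m`; it is
written through `sinc` because this exhibits its boundedness near `0`. -/
noncomputable def lanczosDensity (m u : ℝ) : ℝ :=
  m * (sinc u ^ (m - 1) * ((sin u - u * cos u) / u ^ 3))

lemma hasDerivAt_sinc_rpow (m : ℝ) {u : ℝ} (hu : u ∈ Set.Ioo 0 π) :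
    HasDerivAt (fun v ↦ sinc v ^ m) (-(u * lanczosDensity m u)) u := by
  have hsinc : sinc u ≠ 0 := (sinc_pos_of_mem_Ioo hu).ne'
  refine ((hasDerivAt_sinc hu.1.ne').rpow_const (Or.inl hsinc)).congr_deriv ?_
  rw [lanczosDensity]
  ring

lemma continuous_sinc_rpow (hm : 0 ≤ m) : Continuous fun u ↦ sinc u ^ m :=
  continuous_sinc.rpow_const fun _ ↦ Or.inr hm

lemma lanczosDensity_nonneg {u : ℝ} (hm : 0 ≤ m) (hu : u ∈ Set.Ioo 0 π) :
    0 ≤ lanczosDensity m u := by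
  have hsinc := sinc_pos_of_mem_Ioo hu
  have hnum : 0 ≤ sin u - u * cos u := sub_nonneg.2 (mul_cos_le_sin hu.1.le hu.2.le)
  have hu0 := hu.1
  rw [lanczosDensity]
  positivity

lemma lanczosDensity_le {u : ℝ} (hm : 0 ≤ m) (hu0 : 0 < u) (hu1 : u ≤ 1) :
    lanczosDensity m u ≤ m := by
  have hu : u ∈ Set.Ioo 0 π := ⟨hu0, by linarith [pi_gt_three]⟩
  have hsin := sin_pos_of_mem_Ioo hu
  have hrpow : sinc u ^ (m - 1) ≤ u / sin u := by
    rw [← inv_div, ← sinc_of_ne_zero hu0.ne', ← rpow_neg_one]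
    exact rpow_le_rpow_of_exponent_ge (sinc_pos_of_mem_Ioo hu) (sinc_le_one u) (by linarith)
  have hsq : 0 ≤ 1 - u ^ 2 := sub_nonneg.2 (pow_le_one₀ hu0.le hu1)
  have hcos : (1 - u ^ 2) * sin u ≤ u * cos u := by
    calc (1 - u ^ 2) * sin u ≤ (1 - u ^ 2) * u := by gcongr; exact sin_le hu0.le
      _ = u * (1 - u ^ 2) := mul_comm _ _
      _ ≤ u * (1 - u ^ 2 / 2) := by gcongr; linarith [sq_nonneg u]
      _ ≤ u * cos u := by gcongr; exact one_sub_sq_div_two_le_cos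
  have hnum : sin u - u * cos u ≤ u ^ 2 * sin u := by linarith
  have hnonneg : 0 ≤ sin u - u * cos u := sub_nonneg.2 (mul_cos_le_sin hu0.le hu.2.le)
  refine mul_le_of_le_one_right hm ?_
  calc sinc u ^ (m - 1) * ((sin u - u * cos u) / u ^ 3)
      ≤ u / sin u * ((u ^ 2 * sin u) / u ^ 3) := by gcongr
    _ = 1 := by field_simp

lemma intervalIntegrable_lanczosDensity (hm : 0 ≤ m) :
    IntervalIntegrable (lanczosDensity m) volume 0 π := by
  have hmeas : Measurable (lanczosDensity m) := by
    unfold lanczosDensity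
    fun_prop
  exact intervalIntegrable_of_hasDerivAt_neg_mul pi_pos.le (continuous_sinc_rpow hm).continuousOn
    (fun _ ↦ hasDerivAt_sinc_rpow m) (fun _ ↦ lanczosDensity_nonneg hm)
    hmeas.aestronglyMeasurable fun _ hu ↦ lanczosDensity_le hm hu.1

lemma integral_lanczosDensity (m : ℝ) :
    ∫ u in 0..π, lanczosDensity m u = m * lanczosCm m := by
  rw [intervalIntegral.integral_of_le pi_pos.le, integral_Ioc_eq_integral_Ioo, lanczosCm,
    ← integral_const_mul]
  refine setIntegral_congr_fun measurableSet_Ioo fun u hu ↦ ?_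
  have hu0 := hu.1
  have hpow : u ^ (m + 2) = u ^ (m - 1) * u ^ 3 := by
    have hexp : m + 2 = m - 1 + (3 : ℕ) := by push_cast; ring
    rw [hexp, rpow_add hu0, rpow_natCast]
  simp only [lanczosDensity]
  rw [sinc_of_ne_zero hu0.ne', div_rpow (sin_pos_of_mem_Ioo hu).le hu0.le, hpow, div_mul_div_comm]

lemma mul_lanczosCm_nonneg (hm : 0 ≤ m) : 0 ≤ m * lanczosCm m := by
  rw [← integral_lanczosDensity, intervalIntegral.integral_of_le pi_pos.le,
    integral_Ioc_eq_integral_Ioo]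
  exact setIntegral_nonneg measurableSet_Ioo fun _ ↦ lanczosDensity_nonneg hm

lemma dampL_eq_sinc_rpow (m : ℝ) (k j : ℕ) : dampL m k j = sinc (j * (π / (k + 1))) ^ m := by
  rcases eq_or_ne j 0 with rfl | hj
  · simp [dampL]
  · rw [dampL, if_neg hj, sinc_of_ne_zero (by positivity), mul_div_assoc]

lemma dampL_le_one (hm : 0 ≤ m) (k j : ℕ) : dampL m k j ≤ 1 := by
  rw [dampL_eq_sinc_rpow]
  exact (le_abs_self _).trans <| (abs_rpow_le_abs_rpow _ _).trans <|
    rpow_le_one (abs_nonneg _) (abs_sinc_le_one _) hm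

lemma sum_range_dampL_sub_div_le (hm : 0 ≤ m) {k n : ℕ} (hn : n ≤ k + 1) :
    ∑ j ∈ Finset.range n, (dampL m k j - dampL m k (j + 1)) / (j + 1)
      ≤ π / (k + 1) * (m * lanczosCm m) := by
  have hnπ : n * (π / (k + 1)) ≤ π := by
    have hn' : (n : ℝ) ≤ k + 1 := by exact_mod_cast hn
    rw [mul_div_left_comm]
    exact mul_le_of_le_one_right pi_pos.le (div_le_one_of_le₀ hn' (by positivity))
  have hn0 : 0 ≤ n * (π / (k + 1)) := by positivity
  have hsub : Set.Ioo 0 (n * (π / (k + 1))) ⊆ Set.Ioo 0 π := Set.Ioo_subset_Ioo_right hnπ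
  have hint := intervalIntegrable_lanczosDensity hm
  simp only [dampL_eq_sinc_rpow]
  refine (sum_sub_div_succ_le_mul_integral (f := fun u ↦ sinc u ^ m) (by positivity) n
    (continuous_sinc_rpow hm).continuousOn (fun u hu ↦ hasDerivAt_sinc_rpow m (hsub hu))
    (fun u hu ↦ lanczosDensity_nonneg hm (hsub hu)) (hint.mono_set ?_)).trans ?_
  · rw [Set.uIcc_of_le hn0, Set.uIcc_of_le pi_pos.le]
    exact Set.Icc_subset_Icc_right hnπ
  · rw [← integral_lanczosDensity]
    gcongr
    refine intervalIntegral.integral_mono_interval le_rfl hn0 hnπ ?_ hint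
    rw [← restrict_Ioo_eq_restrict_Ioc]
    exact (ae_restrict_iff' measurableSet_Ioo).2 (.of_forall fun _ ↦ lanczosDensity_nonneg hm)

lemma one_sub_dampL_add_sum_Ico_le (hm : 0 ≤ m) {k n : ℕ} (hn : 1 ≤ n) (hnk : n ≤ k + 1) :
    1 - dampL m k 1 + ∑ j ∈ Finset.Ico 1 n, (dampL m k j - dampL m k (j + 1)) / (j + 1)
      ≤ π / (k + 1) * (m * lanczosCm m) := by
  have h := sum_range_dampL_sub_div_le hm hnk
  rw [Finset.sum_range_eq_add_Ico _ hn] at h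
  simpa [dampL] using h

lemma dampL_two_one_sub_dampL_two_two_le (hm : 0 ≤ m) :
    dampL m 2 1 - dampL m 2 2 ≤ 6 * (1 - dampL m 2 1) := by
  have hsinc : 0 ≤ sinc (π / 3) :=
    (sinc_pos_of_mem_Ioo ⟨by positivity, by linarith [pi_pos]⟩).le
  have h := rpow_sub_rpow_le_mul_one_sub hsinc hm sinc_pi_div_three_pow_le
  have hden : (2 : ℝ) + 1 = 3 := by norm_num
  simpa only [dampL_eq_sinc_rpow, hden, Nat.cast_one, one_mul, Nat.cast_ofNat] using h

end Lanczos

/-- For every real `m > 0` and all integers `k ≥ 1` and `1 ≤ k' ≤ k`,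
`∑_{j=1}^{k'-1} (d^m_{j,k} - d^m_{j+1,k})/(j+1) ≤ m C_m` (the sum being empty for `k' = 1`). -/
theorem dampL_diff_sum_le (m : ℝ) (hm : 0 < m) (k k' : ℕ) (hk : 1 ≤ k)
    (hk' : 1 ≤ k') (hk'k : k' ≤ k) :
    ∑ j ∈ Finset.Icc 1 (k' - 1), (dampL m k j - dampL m k (j + 1)) / (j + 1)
      ≤ m * lanczosCm m := by
  have hC : 0 ≤ m * lanczosCm m := mul_lanczosCm_nonneg hm.le
  have hsum := one_sub_dampL_add_sum_Ico_le hm.le hk' (hk'k.trans k.le_succ)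
  have hd : dampL m k 1 ≤ 1 := dampL_le_one hm.le k 1
  rw [Finset.Icc_sub_one_right_eq_Ico_of_not_isMin (not_isMin_of_lt hk')]
  rcases Nat.lt_or_ge 2 k with hk3 | hk2
  · have hh : π / (k + 1) ≤ 1 := by
      have : (3 : ℝ) ≤ k := by exact_mod_cast hk3
      exact div_le_one_of_le₀ (by linarith [pi_le_four]) (by positivity)
    linarith [mul_le_of_le_one_left hC hh]
  obtain rfl | ⟨rfl, rfl⟩ : k' = 1 ∨ k = 2 ∧ k' = 2 := by omega
  · simpa using hC
  · have hh : π / ((2 : ℕ) + 1) ≤ 4 / 3 := by push_cast; linarith [pi_le_four]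
    have hS := dampL_two_one_sub_dampL_two_two_le hm.le
    simp only [Nat.Ico_succ_singleton, Finset.sum_singleton, Nat.cast_one,
      one_add_one_eq_two] at hsum ⊢
    linarith [mul_le_mul_of_nonneg_right hh hC]
end
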